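/- arXiv:2402.15503 — 2 statements merged into one kernel-verified Lean document; each statement's English description precedes it below -/
import Mathlib

section
/- Let n ≥ 2, let Ω be a nonempty open connected subset of ℝⁿ, and let u : Ω → ℝ be locally Lipschitz on Ω. Let Z_u = {x ∈ Ω : u(x) = 0}. If Z_u is neither empty nor all of Ω, then the lower Lebesgue integral ∫_{Ω∖Z_u} (‖fderiv u x‖ / |u(x)|)ⁿ dv is infinite. -/
open MeasureTheory

/-!
By connectedness some zero `z` of `u` is a limit of points where `u ≠ 0`. In polar coordinates
around `z`, the function `h s = u (z + s • v)` is not identically zero for a set of directions `v`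
of positive measure, and it suffices that `∫ s ^ (n - 1) * |h' / h| ^ n` diverges for each of them.
If `c` is the last zero of `h` before a point where `h ≠ 0`, then `log |h s| - log s / 2` has
derivative at most `2 ^ (n - 1) * s ^ (n - 1) * |h' / h| ^ n`, yet tends to `-∞` as `s` decreases
to `c`, because the Lipschitz function `h` vanishes at `c` to first order. The correction
`log s / 2` makes the weight `s ^ (n - 1)` harmless when `c = 0`.
-/

open Set Filter Metric Module
open scoped Topology ENNReal NNReal

section Topology

lemma exists_mem_Ico_eq_forall_mem_Ioc_ne {α Y : Type*} [ConditionallyCompleteLinearOrder α]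
    [TopologicalSpace α] [OrderTopology α] [TopologicalSpace Y] [T1Space Y] {f : α → Y} {a b : α}
    {y : Y} (hab : a ≤ b) (hf : ContinuousOn f (Icc a b)) (ha : f a = y) (hb : f b ≠ y) :
    ∃ c ∈ Ico a b, f c = y ∧ ∀ s ∈ Ioc c b, f s ≠ y := by
  have hclosed : IsClosed (Icc a b ∩ f ⁻¹' {y}) :=
    hf.preimage_isClosed_of_isClosed isClosed_Icc isClosed_singleton
  obtain ⟨c, ⟨hc, hcy⟩, hmax⟩ :=
    (isCompact_Icc.of_isClosed_subset hclosed inter_subset_left).exists_isGreatest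
      ⟨a, left_mem_Icc.2 hab, ha⟩
  refine ⟨c, ⟨hc.1, hc.2.lt_of_ne (by rintro rfl; exact hb hcy)⟩, hcy, fun s hs hsy => ?_⟩
  exact hs.1.not_ge (hmax ⟨⟨hc.1.trans hs.1.le, hs.2⟩, hsy⟩)

lemma exists_eq_and_frequently_ne {X Y : Type*} [TopologicalSpace X]
    [TopologicalSpace Y] [T1Space Y] {Ω : Set X} (hΩ : IsPreconnected Ω) (hΩo : IsOpen Ω)
    {u : X → Y} (hu : ContinuousOn u Ω) {y : Y} (heq : ∃ x ∈ Ω, u x = y)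
    (hne : ∃ x ∈ Ω, u x ≠ y) : ∃ z ∈ Ω, u z = y ∧ ∃ᶠ x in 𝓝 z, u x ≠ y := by
  by_contra! hcon
  have hEq : IsOpen {x ∈ Ω | u x = y} :=
    isOpen_iff_mem_nhds.2 fun z hz => inter_mem (hΩo.mem_nhds hz.1) (hcon z hz.1 hz.2)
  have hNe : IsOpen {x ∈ Ω | u x ≠ y} := hu.isOpen_inter_preimage hΩo isOpen_ne
  obtain ⟨x, -, hxe, hxn⟩ := hΩ _ _ hEq hNe
    (fun x hx => (em (u x = y)).imp (fun h => ⟨hx, h⟩) fun h => ⟨hx, h⟩)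
    (heq.imp fun x hx => ⟨hx.1, hx⟩) (hne.imp fun x hx => ⟨hx.1, hx⟩)
  exact hxn.2 hxe.2

end Topology

section OneVariable

variable {K : ℝ≥0} {h φ : ℝ → ℝ} {a b c : ℝ}

lemma ofReal_sub_le_lintegral_deriv (hab : a ≤ b) (hφ : AbsolutelyContinuousOnInterval φ a b) :
    ENNReal.ofReal (φ b - φ a) ≤ ∫⁻ s in Ioc a b, ENNReal.ofReal (deriv φ s) := by
  have hint : IntegrableOn (deriv φ) (Ioc a b) :=
    (intervalIntegrable_iff_integrableOn_Ioc_of_le hab).1 hφ.intervalIntegrable_deriv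
  rw [← hφ.integral_deriv_eq_sub, intervalIntegral.integral_of_le hab,
    integral_eq_lintegral_pos_part_sub_lintegral_neg_part hint]
  exact ENNReal.ofReal_le_of_le_toReal (sub_le_self _ ENNReal.toReal_nonneg)

lemma lintegral_deriv_eq_top_of_tendsto_atBot (hcb : c < b)
    (hφ : ∀ a ∈ Ioo c b, AbsolutelyContinuousOnInterval φ a b)
    (hlim : Tendsto φ (𝓝[>] c) atBot) :
    ∫⁻ s in Ioc c b, ENNReal.ofReal (deriv φ s) = ⊤ := by
  have htop : Tendsto (fun a => ENNReal.ofReal (φ b - φ a)) (𝓝[>] c) (𝓝 ⊤) :=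
    ENNReal.tendsto_ofReal_atTop.comp
      (tendsto_atTop_add_const_left _ (φ b) (tendsto_neg_atBot_atTop.comp hlim))
  refine top_unique (le_of_tendsto htop ?_)
  filter_upwards [Ioo_mem_nhdsGT hcb] with a ha
  exact (ofReal_sub_le_lintegral_deriv ha.2.le (hφ a ha)).trans
    (lintegral_mono_set (Ioc_subset_Ioc_left ha.1.le))

lemma absolutelyContinuousOnInterval_log_comp (hh : LipschitzOnWith K h (uIcc a b))
    (hne : ∀ s ∈ uIcc a b, h s ≠ 0) :
    AbsolutelyContinuousOnInterval (fun s => Real.log (h s)) a b := by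
  have himage : IsCompact (h '' uIcc a b) := isCompact_uIcc.image_of_continuousOn hh.continuousOn
  have hconvex : Convex ℝ (h '' uIcc a b) :=
    (isPreconnected_uIcc.image h hh.continuousOn).ordConnected.convex
  have hlog : ContDiffOn ℝ 1 Real.log (h '' uIcc a b) :=
    Real.contDiffOn_log.mono (by rintro _ ⟨s, hs, rfl⟩; exact hne s hs)
  obtain ⟨L, hL⟩ := hlog.exists_lipschitzOnWith one_ne_zero hconvex himage
  exact (hL.comp hh (mapsTo_image h _)).absolutelyContinuousOnInterval

/-- A Lipschitz `h` vanishes at `c` to first order, so that `log |h s|` is at most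
`log (s - c) + O(1)`, and half of this survives the subtraction, even when `c = 0`. -/
lemma tendsto_log_comp_sub_half_log_atBot (hc : 0 ≤ c) (hcb : c < b)
    (hh : LipschitzOnWith K h (Icc c b)) (hc0 : h c = 0) (hne : ∀ s ∈ Ioc c b, h s ≠ 0) :
    Tendsto (fun s => Real.log (h s) - 1 / 2 * Real.log s) (𝓝[>] c) atBot := by
  have hsub : Tendsto (fun s => s - c) (𝓝[>] c) (𝓝[>] 0) := by
    have hsub0 : Tendsto (fun s => s - c) (𝓝 c) (𝓝 0) :=
      (continuous_sub_right c).tendsto' c 0 (sub_self c)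
    exact tendsto_nhdsWithin_iff.2
      ⟨hsub0.mono_left nhdsWithin_le_nhds,
        eventually_mem_nhdsWithin.mono fun _ hs => sub_pos.2 (mem_Ioi.1 hs)⟩
  have hlim : Tendsto (fun s => Real.log K + 1 / 2 * Real.log (s - c)) (𝓝[>] c) atBot :=
    tendsto_atBot_add_const_left _ _
      ((Real.tendsto_log_nhdsGT_zero.comp hsub).const_mul_atBot (by norm_num))
  refine tendsto_atBot_mono' _ ?_ hlim
  filter_upwards [Ioo_mem_nhdsGT hcb] with s hs
  have hsc : 0 < s - c := sub_pos.2 hs.1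
  have hhs : 0 < |h s| := abs_pos.2 (hne s ⟨hs.1, hs.2.le⟩)
  have hle : |h s| ≤ K * (s - c) := by
    simpa [Real.dist_eq, hc0, abs_of_pos hsc] using
      hh.dist_le_mul s ⟨hs.1.le, hs.2.le⟩ c (left_mem_Icc.2 hcb.le)
  have hK : (0 : ℝ) < K := pos_of_mul_pos_left (hhs.trans_le hle) hsc.le
  have hlogh : Real.log (h s) ≤ Real.log K + Real.log (s - c) := by
    rw [← Real.log_mul hK.ne' hsc.ne', ← Real.log_abs]
    exact Real.log_le_log hhs hle
  have hlogs : Real.log (s - c) ≤ Real.log s := Real.log_le_log hsc (sub_le_self s hc)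
  linarith

/-- With `t = 2 * s * x`, this is `t ≤ 1 + t ^ (n + 1)` divided by `2 * s`. -/
lemma sub_half_inv_le_pow_mul_pow (n : ℕ) {s x : ℝ} (hs : 0 < s) (hx : 0 ≤ x) :
    x - 1 / 2 * s⁻¹ ≤ 2 ^ n * (s ^ n * x ^ (n + 1)) := by
  have ht : 2 * s * x - 1 ≤ (2 * s * x) ^ (n + 1) := by
    rcases le_total (2 * s * x) 1 with hle | hge
    · exact (sub_nonpos.2 hle).trans (by positivity)
    · exact (sub_le_self _ zero_le_one).trans (le_self_pow₀ hge n.succ_ne_zero)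
  calc x - 1 / 2 * s⁻¹ = (2 * s * x - 1) / (2 * s) := by field_simp
    _ ≤ (2 * s * x) ^ (n + 1) / (2 * s) := by gcongr
    _ = 2 ^ n * (s ^ n * x ^ (n + 1)) := by field_simp; ring

lemma deriv_log_comp_sub_half_log_le (n : ℕ) {s : ℝ} (hs : 0 < s) (hd : DifferentiableAt ℝ h s)
    (hne : h s ≠ 0) :
    deriv (fun s => Real.log (h s) - 1 / 2 * Real.log s) s
      ≤ 2 ^ n * (s ^ n * |logDeriv h s| ^ (n + 1)) := by
  have hder : HasDerivAt (fun s => Real.log (h s) - 1 / 2 * Real.log s)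
      (logDeriv h s - 1 / 2 * s⁻¹) s :=
    (hd.hasDerivAt.log hne).sub ((Real.hasDerivAt_log hs.ne').const_mul (1 / 2))
  rw [hder.deriv]
  exact (sub_le_sub_right (le_abs_self _) _).trans
    (sub_half_inv_le_pow_mul_pow n hs (abs_nonneg _))

lemma lintegral_Ioc_pow_mul_logDeriv_pow_eq_top (n : ℕ) (hc : 0 ≤ c) (hcb : c < b)
    (hh : LipschitzOnWith K h (Icc c b)) (hc0 : h c = 0) (hne : ∀ s ∈ Ioc c b, h s ≠ 0) :
    ∫⁻ s in Ioc c b, ENNReal.ofReal (s ^ n * |logDeriv h s| ^ (n + 1)) = ⊤ := by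
  set φ : ℝ → ℝ := fun s => Real.log (h s) - 1 / 2 * Real.log s
  have hφ : ∀ a ∈ Ioo c b, AbsolutelyContinuousOnInterval φ a b := by
    intro a ha
    have hsub : uIcc a b ⊆ Ioc c b := by
      rw [uIcc_of_le ha.2.le]
      exact (Icc_subset_Ioc_iff ha.2.le).2 ⟨ha.1, le_rfl⟩
    refine (absolutelyContinuousOnInterval_log_comp (hh.mono (hsub.trans Ioc_subset_Icc_self))
      fun s hs => hne s (hsub hs)).sub (.const_mul _ ?_)
    exact absolutelyContinuousOnInterval_log_comp (LipschitzWith.id.lipschitzOnWith)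
      fun s hs => (hc.trans_lt (hsub hs).1).ne'
  have hdiff : ∀ᵐ s, s ∈ Ioc c b → DifferentiableAt ℝ h s := by
    filter_upwards [hh.ae_differentiableWithinAt_of_mem_real, Measure.ae_ne volume b]
      with s hs hsb hmem
    exact (hs (Ioc_subset_Icc_self hmem)).differentiableAt
      (Icc_mem_nhds hmem.1 (hmem.2.lt_of_ne hsb))
  have hle : ∫⁻ s in Ioc c b, ENNReal.ofReal (deriv φ s) ≤ ENNReal.ofReal (2 ^ n) *
      ∫⁻ s in Ioc c b, ENNReal.ofReal (s ^ n * |logDeriv h s| ^ (n + 1)) := by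
    rw [← lintegral_const_mul' _ _ ENNReal.ofReal_ne_top]
    refine setLIntegral_mono_ae' measurableSet_Ioc (hdiff.mono fun s hs hmem => ?_)
    rw [← ENNReal.ofReal_mul (by positivity)]
    exact ENNReal.ofReal_le_ofReal
      (deriv_log_comp_sub_half_log_le n (hc.trans_lt hmem.1) (hs hmem) (hne s hmem))
  rw [lintegral_deriv_eq_top_of_tendsto_atBot hcb hφ
    (tendsto_log_comp_sub_half_log_atBot hc hcb hh hc0 hne), top_le_iff] at hle
  exact (ENNReal.mul_eq_top.1 hle).elim And.right fun htop => absurd htop.1 ENNReal.ofReal_ne_top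

end OneVariable

section Polar

lemma lintegral_volumeIoiPow (n : ℕ) (f : ℝ → ℝ≥0∞) :
    ∫⁻ r, f r ∂Measure.volumeIoiPow n = ∫⁻ r in Ioi 0, ENNReal.ofReal (r ^ n) * f r := by
  rw [Measure.volumeIoiPow, lintegral_withDensity_eq_lintegral_mul_non_measurable _ (by fun_prop)
    (.of_forall fun _ => ENNReal.ofReal_lt_top)]
  exact lintegral_subtype_comap measurableSet_Ioi fun r => ENNReal.ofReal (r ^ n) * f r

lemma ae_volumeIoiPow_iff {n : ℕ} {p : ℝ → Prop} :
    (∀ᵐ r : Ioi (0 : ℝ) ∂Measure.volumeIoiPow n, p r) ↔ ∀ᵐ r, r ∈ Ioi (0 : ℝ) → p r := by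
  rw [Measure.volumeIoiPow, ae_withDensity_iff (by fun_prop),
    ← ae_restrict_iff' measurableSet_Ioi, ae_restrict_iff_subtype measurableSet_Ioi]
  refine eventually_congr (.of_forall fun r => imp_iff_right ?_)
  exact (ENNReal.ofReal_pos.2 (pow_pos r.2 n)).ne'

variable {E : Type*} [NormedAddCommGroup E] [NormedSpace ℝ E]

lemma add_smul_mem_ball {z v : E} {r R : ℝ} (hv : ‖v‖ ≤ 1) (hr : r ∈ Ico 0 R) :
    z + r • v ∈ ball z R := by
  rw [add_mem_ball_iff_norm, norm_smul, Real.norm_of_nonneg hr.1]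
  exact (mul_le_of_le_one_right hr.1 hv).trans_lt hr.2

variable [FiniteDimensional ℝ E] [MeasurableSpace E] [BorelSpace E] (μ : Measure E)

lemma frequently_sphere_ne [μ.IsOpenPosMeasure] {Y : Type*} [TopologicalSpace Y] [T1Space Y]
    {f : E → Y} {z x : E} {R : ℝ} {y : Y} (hf : ContinuousOn f (ball z R)) (hx : x ∈ ball z R)
    (hxz : x ≠ z) (hfx : f x ≠ y) :
    ∃ᵐ v : sphere (0 : E) 1 ∂μ.toSphere, f (z + ‖x - z‖ • (v : E)) ≠ y := by
  have hnorm : 0 < ‖x - z‖ := norm_sub_pos_iff.2 hxz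
  have hmaps (v : sphere (0 : E) 1) : z + ‖x - z‖ • (v : E) ∈ ball z R :=
    add_smul_mem_ball (norm_eq_of_mem_sphere v).le ⟨hnorm.le, mem_ball_iff_norm.1 hx⟩
  have hcont : Continuous fun v : sphere (0 : E) 1 => f (z + ‖x - z‖ • (v : E)) :=
    hf.comp_continuous (by fun_prop) hmaps
  have hopen : IsOpen {v : sphere (0 : E) 1 | f (z + ‖x - z‖ • (v : E)) ≠ y} :=
    isOpen_ne.preimage hcont
  have hdir : ‖x - z‖⁻¹ • (x - z) ∈ sphere (0 : E) 1 := by simp [norm_smul, hnorm.ne']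
  refine frequently_ae_iff.2 (hopen.measure_pos _ ⟨⟨_, hdir⟩, ?_⟩).ne'
  simpa [smul_smul, hnorm.ne'] using hfx

variable [Nontrivial E] [μ.IsAddHaarMeasure]

lemma measurePreserving_add_smul_sphere (z : E) :
    MeasurePreserving (fun p : sphere (0 : E) 1 × Ioi (0 : ℝ) => z + (p.2 : ℝ) • (p.1 : E))
      (μ.toSphere.prod (Measure.volumeIoiPow (finrank ℝ E - 1))) μ := by
  have hpolar := μ.measurePreserving_homeomorphUnitSphereProd.symm
    (homeomorphUnitSphereProd E).toMeasurableEquiv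
  have hval : MeasurePreserving ((↑) : ({0}ᶜ : Set E) → E) (μ.comap (↑)) μ := by
    simpa using measurePreserving_subtype_coe (μa := μ) (measurableSet_singleton (0 : E)).compl
  exact (measurePreserving_add_left μ z).comp (hval.comp hpolar)

lemma ae_ae_ray {p : E → Prop} (hp : ∀ᵐ x ∂μ, p x) (z : E) :
    ∀ᵐ v : sphere (0 : E) 1 ∂μ.toSphere, ∀ᵐ r, r ∈ Ioi (0 : ℝ) → p (z + r • (v : E)) := by
  have hpolar := (measurePreserving_add_smul_sphere μ z).quasiMeasurePreserving.ae hp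
  filter_upwards [Measure.ae_ae_of_ae_prod hpolar] with v hv
  exact (ae_volumeIoiPow_iff (p := fun r => p (z + r • (v : E)))).1 hv

lemma lintegral_eq_top_of_frequently_ray {f : E → ℝ≥0∞} (hf : AEMeasurable f μ) (z : E)
    (htop : ∃ᵐ v : sphere (0 : E) 1 ∂μ.toSphere,
      ∫⁻ r in Ioi 0, ENNReal.ofReal (r ^ (finrank ℝ E - 1)) * f (z + r • (v : E)) = ⊤) :
    ∫⁻ x, f x ∂μ = ⊤ := by
  have hpolar := measurePreserving_add_smul_sphere μ z
  rw [← hpolar.map_eq] at hf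
  have hfpolar := hf.comp_aemeasurable hpolar.aemeasurable
  rw [← hpolar.map_eq, lintegral_map' hf hpolar.aemeasurable]
  refine (lintegral_prod _ hfpolar).trans
    (lintegral_eq_top_of_measure_eq_top_ne_zero hfpolar.lintegral_prod_right' ?_)
  refine frequently_ae_iff.1 (htop.mono fun v hv => ?_)
  rwa [← lintegral_volumeIoiPow _ fun r => f (z + r • (v : E))] at hv

end Polar

section GradientQuotient

variable {E : Type*} [NormedAddCommGroup E] [NormedSpace ℝ E] {K : ℝ≥0} {u : E → ℝ}

lemma abs_logDeriv_comp_add_smul_le {z v : E} {r : ℝ} (hv : ‖v‖ ≤ 1)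
    (hu : DifferentiableAt ℝ u (z + r • v)) :
    |logDeriv (fun s => u (z + s • v)) r| ≤ ‖fderiv ℝ u (z + r • v)‖ / |u (z + r • v)| := by
  have hline : HasDerivAt (fun s : ℝ => z + s • v) v r := by
    simpa using ((hasDerivAt_id r).smul_const v).const_add z
  have hderiv : HasDerivAt (fun s => u (z + s • v)) (fderiv ℝ u (z + r • v) v) r :=
    hu.hasFDerivAt.comp_hasDerivAt r hline
  rw [logDeriv_apply, hderiv.deriv, abs_div]
  gcongr
  exact (fderiv ℝ u (z + r • v)).unit_le_opNorm v hv

lemma lintegral_ray_gradient_quotient_eq_top (n : ℕ) {s : Set E} {z v : E} {b : ℝ}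
    (hv : ‖v‖ ≤ 1) (hb : 0 ≤ b) (hs : MapsTo (fun r : ℝ => z + r • v) (Icc 0 b) s)
    (hu : LipschitzOnWith K u s) (hz : u z = 0) (hub : u (z + b • v) ≠ 0)
    (hdiff : ∀ᵐ r, r ∈ Ioi (0 : ℝ) → z + r • v ∈ s → DifferentiableAt ℝ u (z + r • v)) :
    ∫⁻ r in Ioi 0, ENNReal.ofReal (r ^ n) * (s \ u ⁻¹' {0}).indicator
      (fun x => ENNReal.ofReal ((‖fderiv ℝ u x‖ / |u x|) ^ (n + 1))) (z + r • v) = ⊤ := by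
  set h : ℝ → ℝ := fun r => u (z + r • v)
  have hline : LipschitzWith ‖v‖₊ (fun r : ℝ => z + r • v) :=
    .of_dist_le_mul fun r t => by simp [dist_eq_norm, ← sub_smul, norm_smul, mul_comm]
  have hh : LipschitzOnWith (K * ‖v‖₊) h (Icc 0 b) := hu.comp hline.lipschitzOnWith hs
  obtain ⟨c, hc, hhc, hne⟩ := exists_mem_Ico_eq_forall_mem_Ioc_ne hb hh.continuousOn
    (by simpa [h] using hz) hub
  refine top_unique ?_
  calc ⊤ = ∫⁻ r in Ioc c b, ENNReal.ofReal (r ^ n * |logDeriv h r| ^ (n + 1)) :=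
        (lintegral_Ioc_pow_mul_logDeriv_pow_eq_top n hc.1 hc.2 (hh.mono (Icc_subset_Icc_left hc.1))
          hhc hne).symm
    _ ≤ ∫⁻ r in Ioc c b, ENNReal.ofReal (r ^ n) * (s \ u ⁻¹' {0}).indicator
          (fun x => ENNReal.ofReal ((‖fderiv ℝ u x‖ / |u x|) ^ (n + 1))) (z + r • v) := by
      refine setLIntegral_mono_ae' measurableSet_Ioc (hdiff.mono fun r hr hmem => ?_)
      have hr0 : 0 < r := hc.1.trans_lt hmem.1
      have hrs : z + r • v ∈ s := hs ⟨hr0.le, hmem.2⟩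
      have hrZ : z + r • v ∈ s \ u ⁻¹' {0} := ⟨hrs, hne r hmem⟩
      rw [indicator_of_mem hrZ, ← ENNReal.ofReal_mul (by positivity)]
      gcongr
      exact abs_logDeriv_comp_add_smul_le hv (hr hr0 hrs)
    _ ≤ _ := lintegral_mono_set fun r hr => hc.1.trans_lt hr.1

variable [FiniteDimensional ℝ E] [MeasurableSpace E] [BorelSpace E] (μ : Measure E)
  [μ.IsAddHaarMeasure]

lemma lintegral_ball_gradient_quotient_eq_top {z y : E} {R : ℝ}
    (hu : LipschitzOnWith K u (ball z R)) (hz : u z = 0) (hy : y ∈ ball z R) (huy : u y ≠ 0) :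
    ∫⁻ x in ball z R \ u ⁻¹' {0},
      ENNReal.ofReal ((‖fderiv ℝ u x‖ / |u x|) ^ finrank ℝ E) ∂μ = ⊤ := by
  have hyz : y ≠ z := by rintro rfl; exact huy hz
  have : Nontrivial E := nontrivial_of_ne y z hyz
  have hopen : IsOpen (ball z R \ u ⁻¹' {0}) :=
    hu.continuousOn.isOpen_inter_preimage isOpen_ball isOpen_ne
  have hu_meas : AEMeasurable u (μ.restrict (ball z R \ u ⁻¹' {0})) :=
    (hu.continuousOn.mono sdiff_subset).aemeasurable hopen.measurableSet
  have hmeas : AEMeasurable (fun x => ENNReal.ofReal ((‖fderiv ℝ u x‖ / |u x|) ^ finrank ℝ E))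
      (μ.restrict (ball z R \ u ⁻¹' {0})) :=
    (((measurable_fderiv ℝ u).norm.aemeasurable.div
      hu_meas.norm).pow_const _).ennreal_ofReal
  have hdiff : ∀ᵐ x ∂μ, x ∈ ball z R → DifferentiableAt ℝ u x :=
    hu.ae_differentiableWithinAt_of_mem.mono fun x hx hmem =>
      (hx hmem).differentiableAt (isOpen_ball.mem_nhds hmem)
  rw [← lintegral_indicator hopen.measurableSet]
  refine lintegral_eq_top_of_frequently_ray μ
    ((aemeasurable_indicator_iff hopen.measurableSet).2 hmeas) z ?_
  refine ((frequently_sphere_ne μ hu.continuousOn hy hyz huy).and_eventually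
    (ae_ae_ray μ hdiff z)).mono fun v ⟨huv, hdiffv⟩ => ?_
  have hv : ‖(v : E)‖ ≤ 1 := (norm_eq_of_mem_sphere v).le
  have hmaps : MapsTo (fun r : ℝ => z + r • (v : E)) (Icc 0 ‖y - z‖) (ball z R) := fun r hr =>
    add_smul_mem_ball hv ⟨hr.1, hr.2.trans_lt (mem_ball_iff_norm.1 hy)⟩
  have hn : finrank ℝ E - 1 + 1 = finrank ℝ E := Nat.sub_add_cancel finrank_pos
  simpa only [hn] using
    lintegral_ray_gradient_quotient_eq_top (finrank ℝ E - 1) hv (norm_nonneg _) hmaps hu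
      hz huv hdiffv

theorem divergence_of_gradient_quotient_general {Ω : Set E} (hΩo : IsOpen Ω)
    (hΩ : IsPreconnected Ω) (hu : LocallyLipschitzOn Ω u)
    (hZne : {x ∈ Ω | u x = 0} ≠ ∅) (hZprop : {x ∈ Ω | u x = 0} ≠ Ω) :
    ∫⁻ x in Ω \ {x ∈ Ω | u x = 0},
      ENNReal.ofReal ((‖fderiv ℝ u x‖ / |u x|) ^ finrank ℝ E) ∂μ = ⊤ := by
  have hne : ∃ x ∈ Ω, u x ≠ 0 := by simpa [Set.ext_iff] using hZprop
  obtain ⟨z, hzΩ, hz, hfreq⟩ := exists_eq_and_frequently_ne hΩ hΩo hu.continuousOn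
    (nonempty_iff_ne_empty.2 hZne) hne
  obtain ⟨K, t, ht, hut⟩ := hu hzΩ
  rw [hΩo.nhdsWithin_eq hzΩ] at ht
  obtain ⟨R, hR, hball⟩ := Metric.mem_nhds_iff.1 (inter_mem ht (hΩo.mem_nhds hzΩ))
  obtain ⟨y, huy, hy⟩ := (hfreq.and_eventually (ball_mem_nhds z hR)).exists
  have hball_top := lintegral_ball_gradient_quotient_eq_top μ
    (hut.mono (hball.trans inter_subset_left)) hz hy huy
  refine top_unique (hball_top.ge.trans (lintegral_mono_set fun x hx => ?_))
  exact ⟨(hball hx.1).2, fun hxZ => hx.2 hxZ.2⟩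

end GradientQuotient

/-- Theorem 3.6: if `u` is locally Lipschitz on a domain `Ω ⊆ ℝⁿ`, `n ≥ 2`, and the
zero set `Z_u` of `u` is neither empty nor all of `Ω`, then
`∫_{Ω∖Z_u} (|∇u|/|u|)ⁿ dv = ∞`. -/
theorem divergence_of_gradient_quotient (n : ℕ) (hn : 2 ≤ n)
    (Ω : Set (EuclideanSpace ℝ (Fin n))) (hΩopen : IsOpen Ω) (hΩconn : IsConnected Ω)
    (u : EuclideanSpace ℝ (Fin n) → ℝ)
    (hLip : ∀ x ∈ Ω, ∃ (K : NNReal) (t : Set (EuclideanSpace ℝ (Fin n))),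
      t ∈ nhds x ∧ t ⊆ Ω ∧ LipschitzOnWith K u t)
    (hZne : {x ∈ Ω | u x = 0} ≠ ∅) (hZprop : {x ∈ Ω | u x = 0} ≠ Ω) :
    ∫⁻ x in Ω \ {x ∈ Ω | u x = 0},
      ENNReal.ofReal ((‖fderiv ℝ u x‖ / |u x|) ^ n) = ⊤ := by
  have hu : LocallyLipschitzOn Ω u := fun x hx =>
    let ⟨K, t, ht, _, hut⟩ := hLip x hx
    ⟨K, t, mem_nhdsWithin_of_mem_nhds ht, hut⟩
  simpa using divergence_of_gradient_quotient_general volume hΩopen hΩconn.isPreconnected hu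
    hZne hZprop
end

section
/- Let φ : ℝ → ℝ be Lipschitz on the interval [0,1] with φ(0) = 0. Suppose there exist a real number p ≥ 1 and a nonnegative measurable function λ : ℝ → ℝ with ∫₀¹ λ(x)^p dx < ∞ such that for almost every x ∈ (0,1) at which φ is differentiable, |φ′(x)| ≤ λ(x)·|φ(x)|·x^{(1−p)/p}. Then φ(x) = 0 for all x ∈ [0,1]. -/
/-!
The weight `λ(x) x^{(1-p)/p}` need not be integrable at `0`, but by Young's inequality it is at most
`η^{1-p} λ(x)^p + η / x` for every `η > 0`. The first summand is integrable on the whole interval,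
so Grönwall's inequality on `[ε, x]` gives `|φ(x)| ≤ |φ(ε)| · M · (x / ε)^η` with `M` bounded as
`ε → 0`. As `|φ(ε)| = O(ε)`, any `η < 1` makes the right-hand side tend to `0`; likewise decay
`O(ε^α)` with `α > 0` allows any `η < α`.
-/

open MeasureTheory

section Gronwall

open Set Filter Topology Asymptotics Real

lemma mul_rpow_one_sub_div_le {p l x η : ℝ} (hp : 1 ≤ p) (hl : 0 ≤ l) (hx : 0 < x) (hη : 0 < η) :
    l * x ^ ((1 - p) / p) ≤ η ^ (1 - p) * l ^ p + η * x⁻¹ := by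
  have hp0 : 0 < p := by linarith
  have hp1 : 1 / p ≤ 1 := (div_le_one hp0).2 hp
  have hA : 0 ≤ η ^ (1 - p) * l ^ p := by positivity
  have hB : 0 ≤ η * x⁻¹ := by positivity
  have geom_mean :
      (η ^ (1 - p) * l ^ p) ^ (1 / p) * (η * x⁻¹) ^ (1 - 1 / p) = l * x ^ ((1 - p) / p) := by
    have hηη : η ^ ((1 - p) / p) * η ^ (1 - 1 / p) = 1 := by
      rw [← rpow_add hη, show (1 - p) / p + (1 - 1 / p) = 0 by field_simp; ring, rpow_zero]
    have hxx : x⁻¹ ^ (1 - 1 / p) = x ^ ((1 - p) / p) := by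
      rw [inv_rpow hx.le, ← rpow_neg hx.le]
      congr 1
      field_simp
      ring
    rw [mul_rpow (by positivity) (by positivity), mul_rpow hη.le (by positivity), hxx,
      ← rpow_mul hη.le, ← rpow_mul hl, mul_one_div, mul_one_div_cancel hp0.ne', rpow_one]
    linear_combination l * x ^ ((1 - p) / p) * hηη
  calc l * x ^ ((1 - p) / p)
      = (η ^ (1 - p) * l ^ p) ^ (1 / p) * (η * x⁻¹) ^ (1 - 1 / p) := geom_mean.symm
    _ ≤ 1 / p * (η ^ (1 - p) * l ^ p) + (1 - 1 / p) * (η * x⁻¹) :=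
        geom_mean_le_arith_mean2_weighted (by positivity) (by linarith) hA hB (by ring)
    _ ≤ η ^ (1 - p) * l ^ p + η * x⁻¹ :=
        add_le_add (mul_le_of_le_one_left hA hp1)
          (mul_le_of_le_one_left hB (sub_le_self 1 (by positivity)))

lemma absolutelyContinuousOnInterval_locallyLipschitz_comp {E X : Type*}
    [SeminormedAddCommGroup E] [PseudoMetricSpace X] {G : E → X} {f : ℝ → E} {a b : ℝ}
    (hG : LocallyLipschitz G) (hf : AbsolutelyContinuousOnInterval f a b) :
    AbsolutelyContinuousOnInterval (fun x => G (f x)) a b := by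
  obtain ⟨K, hK⟩ := (hG.locallyLipschitzOn (s := f '' uIcc a b)).exists_lipschitzOnWith_of_compact
    (isCompact_uIcc.image_of_continuousOn hf.continuousOn)
  have hlim := Tendsto.const_mul (K : ℝ) hf
  rw [mul_zero] at hlim
  refine squeeze_zero' (.of_forall fun _ => Finset.sum_nonneg fun _ _ => dist_nonneg) ?_ hlim
  filter_upwards [mem_inf_of_right (mem_principal_self _)] with I hI
  rw [Finset.mul_sum]
  exact Finset.sum_le_sum fun i hi => hK.dist_le_mul _ (mem_image_of_mem f (hI.1 i hi).1) _
    (mem_image_of_mem f (hI.1 i hi).2)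

lemma deriv_norm_le_norm_deriv {E : Type*} [NormedAddCommGroup E] [NormedSpace ℝ E] {φ : ℝ → E}
    {x : ℝ} (hφ : DifferentiableAt ℝ φ x) : deriv (fun t => ‖φ t‖) x ≤ ‖deriv φ x‖ := by
  by_cases hnorm : DifferentiableAt ℝ (fun t => ‖φ t‖) x
  · refine le_of_tendsto_of_tendsto hnorm.hasDerivAt.tendsto_slope
      hφ.hasDerivAt.tendsto_slope.norm (.of_forall fun y => ?_)
    calc slope (fun t => ‖φ t‖) x y ≤ |(y - x)⁻¹ * (‖φ y‖ - ‖φ x‖)| := le_abs_self _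
      _ ≤ ‖slope φ x y‖ := by
        rw [slope_def_module, norm_smul, abs_mul, norm_eq_abs]
        gcongr
        exact abs_norm_sub_norm_le _ _
  · rw [deriv_zero_of_not_differentiableAt hnorm]
    exact norm_nonneg _

lemma isBigO_sub_of_lipschitzOnWith {E F : Type*} [SeminormedAddCommGroup E]
    [SeminormedAddCommGroup F] {f : E → F} {s : Set E} {K : NNReal} {a : E}
    (hf : LipschitzOnWith K f s) (ha : a ∈ s) :
    (fun x => f x - f a) =O[𝓝[s] a] fun x => x - a :=
  .of_bound K <| eventually_mem_nhdsWithin.mono fun _ hx => hf.norm_sub_le hx ha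

lemma isLittleO_rpow_rpow_nhdsGT_zero {c α : ℝ} (h : c < α) :
    (fun x : ℝ => x ^ α) =o[𝓝[>] 0] fun x => x ^ c := by
  refine isLittleO_of_tendsto' ?_ ?_
  · filter_upwards [self_mem_nhdsWithin] with x hx hxc
    exact absurd hxc (rpow_pos_of_pos hx c).ne'
  · have hlim : Tendsto (fun x : ℝ => x ^ (α - c)) (𝓝[>] 0) (𝓝 0) := by
      have := (continuousAt_rpow_const 0 (α - c) (.inr (sub_nonneg.2 h.le))).tendsto
      rw [zero_rpow (sub_pos.2 h).ne'] at this
      exact this.mono_left nhdsWithin_le_nhds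
    refine hlim.congr' ?_
    filter_upwards [self_mem_nhdsWithin] with x hx using rpow_sub hx α c

variable {f g w : ℝ → ℝ} {a b c : ℝ}

lemma le_of_ae_deriv_nonpos (hab : a ≤ b) (hf : AbsolutelyContinuousOnInterval f a b)
    (hf' : ∀ᵐ x, x ∈ Ioo a b → deriv f x ≤ 0) : f b ≤ f a := by
  have : ∫ x in a..b, deriv f x ≤ 0 := by
    rw [intervalIntegral.integral_of_le hab, integral_Ioc_eq_integral_Ioo]
    exact setIntegral_nonpos_of_ae_restrict ((ae_restrict_iff' measurableSet_Ioo).2 hf')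
  linarith [hf.integral_deriv_eq_sub]

theorem le_mul_exp_integral_of_ae_deriv_le (hab : a ≤ b)
    (hf : AbsolutelyContinuousOnInterval f a b) (hw : IntervalIntegrable w volume a b)
    (hf' : ∀ᵐ x, x ∈ Ioo a b → deriv f x ≤ w x * f x) :
    f b ≤ f a * exp (∫ x in a..b, w x) := by
  set W : ℝ → ℝ := fun x => ∫ t in a..x, w t with hW
  have hWac : AbsolutelyContinuousOnInterval W a b :=
    hw.absolutelyContinuousOnInterval_intervalIntegral left_mem_uIcc
  have hexp : LocallyLipschitz fun y : ℝ => exp (-y) :=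
    ContDiff.locallyLipschitz (𝕂 := ℝ) (by fun_prop)
  have hac : AbsolutelyContinuousOnInterval (fun x => f x * exp (-W x)) a b :=
    hf.fun_mul <|
      absolutelyContinuousOnInterval_locallyLipschitz_comp (G := fun y => exp (-y)) hexp hWac
  have hderiv : ∀ᵐ x, x ∈ Ioo a b → deriv (fun x => f x * exp (-W x)) x ≤ 0 := by
    filter_upwards [hf.ae_differentiableAt, hw.ae_hasDerivAt_integral, hf'] with x hfx hWx hx' hx
    have hxu : x ∈ uIcc a b := Icc_subset_uIcc (Ioo_subset_Icc_self hx)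
    have hprod := (hfx hxu).hasDerivAt.fun_mul (hWx hxu a left_mem_uIcc).fun_neg.exp
    calc deriv (fun x => f x * exp (-W x)) x = (deriv f x - w x * f x) * exp (-W x) := by
          rw [hprod.deriv]; ring
      _ ≤ 0 := mul_nonpos_of_nonpos_of_nonneg (sub_nonpos.2 (hx' hx)) (exp_pos _).le
  have hle := le_of_ae_deriv_nonpos hab hac hderiv
  simp only [hW, intervalIntegral.integral_same, neg_zero, exp_zero, mul_one, exp_neg] at hle
  rwa [← div_eq_mul_inv, div_le_iff₀ (exp_pos _)] at hle

lemma le_mul_rpow_of_ae_deriv_le (ha : 0 < a) (hab : a ≤ b)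
    (hf : AbsolutelyContinuousOnInterval f a b) (hg : IntervalIntegrable g volume a b)
    (hf' : ∀ᵐ x, x ∈ Ioo a b → deriv f x ≤ (g x + c * x⁻¹) * f x) :
    f b ≤ f a * (exp (∫ x in a..b, g x) * (b / a) ^ c) := by
  have hb : 0 < b := ha.trans_le hab
  have hinv : IntervalIntegrable (fun x : ℝ => c * x⁻¹) volume a b :=
    (intervalIntegrable_inv_iff.2 (.inr (notMem_uIcc_of_lt ha hb))).const_mul c
  have hexp : exp (∫ x in a..b, (g x + c * x⁻¹)) = exp (∫ x in a..b, g x) * (b / a) ^ c := by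
    rw [intervalIntegral.integral_add hg hinv, intervalIntegral.integral_const_mul,
      integral_inv_of_pos ha hb, exp_add, rpow_def_of_pos (div_pos hb ha), mul_comm c]
  exact hexp ▸ le_mul_exp_integral_of_ae_deriv_le hab hf (hg.add hinv) hf'

theorem nonpos_of_isLittleO_rpow_of_ae_deriv_le (hb : 0 < b)
    (hf : ∀ ε ∈ Ioo 0 b, AbsolutelyContinuousOnInterval f ε b)
    (hf0 : f =o[𝓝[>] 0] fun x => x ^ c) (hg : IntervalIntegrable g volume 0 b)
    (hf' : ∀ᵐ x, x ∈ Ioo 0 b → deriv f x ≤ (g x + c * x⁻¹) * f x) : f b ≤ 0 := by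
  have hbound : ∀ ε ∈ Ioo 0 b, f b ≤ f ε / ε ^ c * (exp (∫ x in ε..b, g x) * b ^ c) := by
    intro ε hε
    have hgε : IntervalIntegrable g volume ε b :=
      hg.mono_set (uIcc_subset_uIcc_right (Icc_subset_uIcc (Ioo_subset_Icc_self hε)))
    have hf'ε : ∀ᵐ x, x ∈ Ioo ε b → deriv f x ≤ (g x + c * x⁻¹) * f x :=
      hf'.mono fun x h hx => h (Ioo_subset_Ioo_left hε.1.le hx)
    have hgron := le_mul_rpow_of_ae_deriv_le hε.1 hε.2.le (hf ε hε) hgε hf'ε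
    rw [div_rpow hb.le hε.1.le] at hgron
    exact hgron.trans_eq (by ring)
  have hint : Tendsto (fun ε => ∫ x in ε..b, g x) (𝓝[>] 0) (𝓝 (∫ x in 0..b, g x)) := by
    have hcont := intervalIntegral.continuousOn_primitive_interval_left
      ((intervalIntegrable_iff' (by simp)).1 hg)
    refine (hcont 0 left_mem_uIcc).mono_left ?_
    rw [uIcc_of_le hb.le, nhdsWithin_Icc_eq_nhdsGE hb]
    exact nhdsWithin_mono 0 Ioi_subset_Ici_self
  have hlim : Tendsto (fun ε => f ε / ε ^ c * (exp (∫ x in ε..b, g x) * b ^ c)) (𝓝[>] 0) (𝓝 0) := by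
    simpa only [zero_mul] using
      hf0.tendsto_div_nhds_zero.mul (hint.rexp.mul_const (b ^ c))
  exact ge_of_tendsto hlim (eventually_of_mem (Ioo_mem_nhdsGT hb) hbound)

theorem lipschitz_ode_uniqueness_general {E : Type*} [NormedAddCommGroup E] [NormedSpace ℝ E]
    {φ : ℝ → E} {lam : ℝ → ℝ} {p α : ℝ} (hp : 1 ≤ p) (hα : 0 < α)
    (hac : ∀ ε ∈ Ioo 0 b, AbsolutelyContinuousOnInterval φ ε b)
    (hφ0 : φ =O[𝓝[≥] 0] fun x => x ^ α)
    (hlam0 : ∀ x ∈ Icc 0 b, 0 ≤ lam x)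
    (hlamint : IntegrableOn (fun x => lam x ^ p) (Icc 0 b) volume)
    (hdiff : ∀ᵐ x, x ∈ Ioo 0 b → DifferentiableAt ℝ φ x)
    (hineq : ∀ᵐ x, x ∈ Ioo 0 b → DifferentiableAt ℝ φ x →
      ‖deriv φ x‖ ≤ lam x * ‖φ x‖ * x ^ ((1 - p) / p)) :
    ∀ x ∈ Icc 0 b, φ x = 0 := by
  intro x hx
  rcases hx.1.eq_or_lt with rfl | hx0
  · obtain ⟨C, hC⟩ := hφ0.bound
    simpa [zero_rpow hα.ne'] using hC.self_of_nhdsWithin self_mem_Ici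
  have hlittle : (fun t => ‖φ t‖) =o[𝓝[>] 0] fun t => t ^ (α / 2) :=
    ((hφ0.mono (nhdsWithin_mono 0 Ioi_subset_Ici_self)).trans_isLittleO
      (isLittleO_rpow_rpow_nhdsGT_zero (half_lt_self hα))).norm_left
  have hnorm_ac : ∀ ε ∈ Ioo 0 x, AbsolutelyContinuousOnInterval (fun t => ‖φ t‖) ε x :=
    fun ε hε => absolutelyContinuousOnInterval_locallyLipschitz_comp
      lipschitzWith_one_norm.locallyLipschitz <| (hac ε ⟨hε.1, hε.2.trans_le hx.2⟩).mono <|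
        uIcc_subset_uIcc_left (Icc_subset_uIcc ⟨hε.2.le, hx.2⟩)
  have hg : IntervalIntegrable (fun t => (α / 2) ^ (1 - p) * lam t ^ p) volume 0 x :=
    ((intervalIntegrable_iff_integrableOn_Icc_of_le hx0.le).2
      (hlamint.mono_set (Icc_subset_Icc_right hx.2))).const_mul _
  refine norm_le_zero_iff.1 (nonpos_of_isLittleO_rpow_of_ae_deriv_le hx0 hnorm_ac hlittle hg ?_)
  filter_upwards [hdiff, hineq] with t hdiff_t hineq_t ht
  have htb : t ∈ Ioo 0 b := Ioo_subset_Ioo_right hx.2 ht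
  calc deriv (fun t => ‖φ t‖) t ≤ ‖deriv φ t‖ := deriv_norm_le_norm_deriv (hdiff_t htb)
    _ ≤ lam t * ‖φ t‖ * t ^ ((1 - p) / p) := hineq_t htb (hdiff_t htb)
    _ = lam t * t ^ ((1 - p) / p) * ‖φ t‖ := by ring
    _ ≤ ((α / 2) ^ (1 - p) * lam t ^ p + α / 2 * t⁻¹) * ‖φ t‖ := by
      gcongr
      exact mul_rpow_one_sub_div_le hp (hlam0 t (Ioo_subset_Icc_self htb)) ht.1 (half_pos hα)

end Gronwall

/-- Lemma 3.3: if `φ` is Lipschitz on `[0,1]` with `φ(0) = 0`, and there exist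
`p ≥ 1` and a nonnegative `λ ∈ L^p([0,1])` such that
`|φ'(x)| ≤ λ(x)·|φ(x)|·x^{(1-p)/p}` a.e. on `(0,1)`, then `φ ≡ 0` on `[0,1]`. -/
theorem lipschitz_ode_uniqueness (φ : ℝ → ℝ)
    (hLip : ∃ K : NNReal, LipschitzOnWith K φ (Set.Icc 0 1))
    (hφ0 : φ 0 = 0)
    (p : ℝ) (hp : 1 ≤ p)
    (lam : ℝ → ℝ) (hlammeas : Measurable lam)
    (hlam0 : ∀ x ∈ Set.Icc (0:ℝ) 1, 0 ≤ lam x)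
    (hlamint : IntegrableOn (fun x => lam x ^ p) (Set.Icc (0:ℝ) 1) volume)
    (hineq : ∀ᵐ x, x ∈ Set.Ioo (0:ℝ) 1 → DifferentiableAt ℝ φ x →
      |deriv φ x| ≤ lam x * |φ x| * x ^ ((1 - p) / p)) :
    ∀ x ∈ Set.Icc (0:ℝ) 1, φ x = 0 := by
  obtain ⟨K, hK⟩ := hLip
  have hac : AbsolutelyContinuousOnInterval φ 0 1 :=
    LipschitzOnWith.absolutelyContinuousOnInterval (by rwa [Set.uIcc_of_le zero_le_one])
  have hdecay : Asymptotics.IsBigO (nhdsWithin 0 (Set.Ici 0)) φ fun x => x ^ (1 : ℝ) := by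
    simpa [hφ0, nhdsWithin_Icc_eq_nhdsGE] using
      isBigO_sub_of_lipschitzOnWith hK (Set.left_mem_Icc.2 zero_le_one)
  have hIoo : Set.Ioo (0 : ℝ) 1 ⊆ Set.uIcc 0 1 :=
    Set.Ioo_subset_Icc_self.trans Set.Icc_subset_uIcc
  exact lipschitz_ode_uniqueness_general hp one_pos
    (fun ε hε => hac.mono (Set.uIcc_subset_uIcc_right (hIoo hε))) hdecay hlam0 hlamint
    (hac.ae_differentiableAt.mono fun x h hx => h (hIoo hx)) hineq
end
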